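/- Let (g₀, g₋₁, l₁, l₂, l₃) be a 2-term L∞-algebra over ℝ and let g̃ = (g̃₀, g̃₋₁, l̃₁, l̃₂, l̃₃) be the associated 2-term L∞-algebra. Define F₀ : g̃₀ → g₀ by F₀(x,φ) = x, F₁ = id : g₋₁ → g₋₁, and F₂ : g̃₀ × g̃₀ → g₋₁ by F₂((x,φ),(y,ψ)) = ½(φ(y) − ψ(x)). Then (F₀, F₁, F₂) is an L∞-algebra homomorphism from g̃ to g, i.e. for all a,b,c ∈ g̃₀ and n ∈ g₋₁: (i) F₀(l̃₁(n)) = l₁(F₁(n)); (ii) F₀(l̃₂(a,b)) − l₂(F₀(a),F₀(b)) = l₁(F₂(a,b)); (iii) F₁(l̃₂(a,n)) − l₂(F₀(a),F₁(n)) = F₂(a, l̃₁(n)); (iv) F₂(l̃₂(a,b),c) + F₂(l̃₂(b,c),a) + F₂(l̃₂(c,a),b) + F₁(l̃₃(a,b,c)) = l₂(F₀(a),F₂(b,c)) + l₂(F₀(b),F₂(c,a)) + l₂(F₀(c),F₂(a,b)) + l₃(F₀(a),F₀(b),F₀(c)). -/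

import Mathlib

/-- A 2-term L∞-algebra over ℝ. -/
structure TwoTermLinfty (G0 G1 : Type*) [AddCommGroup G0] [Module ℝ G0]
    [AddCommGroup G1] [Module ℝ G1] where
  l1 : G1 →ₗ[ℝ] G0
  l2 : G0 →ₗ[ℝ] G0 →ₗ[ℝ] G0
  l2' : G0 →ₗ[ℝ] G1 →ₗ[ℝ] G1
  l3 : G0 →ₗ[ℝ] G0 →ₗ[ℝ] G0 →ₗ[ℝ] G1
  skew : ∀ x y, l2 x y = - l2 y x
  alt₁ : ∀ x y z, l3 x y z = - l3 y x z
  alt₂ : ∀ x y z, l3 x y z = - l3 x z y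
  ident_a : ∀ x m, l1 (l2' x m) = l2 x (l1 m)
  ident_b : ∀ m n, l2' (l1 m) n = - l2' (l1 n) m
  ident_c : ∀ x y z,
    l2 x (l2 y z) + l2 y (l2 z x) + l2 z (l2 x y) = l1 (l3 x y z)
  ident_d : ∀ x y m,
    l3 x y (l1 m) = l2' x (l2' y m) - l2' y (l2' x m) - l2' (l2 x y) m
  ident_e : ∀ w x y z,
    l3 (l2 w x) y z - l3 (l2 w y) x z + l3 (l2 w z) x y + l3 (l2 x y) w z
      - l3 (l2 x z) w y + l3 (l2 y z) w x
    = l2' w (l3 x y z) - l2' x (l3 w y z) + l2' y (l3 w x z) - l2' z (l3 w x y)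

section Tilde

variable {G0 G1 : Type*} [AddCommGroup G0] [Module ℝ G0] [AddCommGroup G1] [Module ℝ G1]

/-- `l̃₁(n) = (l₁(n), z ↦ l₂(z,n))`. -/
noncomputable def tl1 (T : TwoTermLinfty G0 G1) (n : G1) : G0 × (G0 →ₗ[ℝ] G1) :=
  (T.l1 n, T.l2'.flip n)

/-- `l̃₂` on two degree-0 elements `(x,φ)`, `(y,ψ)`. -/
noncomputable def tl2 (T : TwoTermLinfty G0 G1) (a b : G0 × (G0 →ₗ[ℝ] G1)) :
    G0 × (G0 →ₗ[ℝ] G1) :=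
  (T.l2 a.1 b.1 + (1/2 : ℝ) • T.l1 (a.2 b.1) - (1/2 : ℝ) • T.l1 (b.2 a.1),
   T.l3 a.1 b.1 + (T.l2' a.1) ∘ₗ b.2 - b.2 ∘ₗ (T.l2 a.1)
     - (1/2 : ℝ) • T.l2'.flip (b.2 a.1)
     - (T.l2' b.1) ∘ₗ a.2 + a.2 ∘ₗ (T.l2 b.1)
     + (1/2 : ℝ) • T.l2'.flip (a.2 b.1)
     + a.2 ∘ₗ (T.l1 ∘ₗ b.2) - b.2 ∘ₗ (T.l1 ∘ₗ a.2))

/-- `l̃₂((x,φ), n) = ½ l₂(x,n) + ½ φ(l₁(n))`. -/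
noncomputable def tl2' (T : TwoTermLinfty G0 G1) (a : G0 × (G0 →ₗ[ℝ] G1)) (n : G1) : G1 :=
  (1/2 : ℝ) • T.l2' a.1 n + (1/2 : ℝ) • a.2 (T.l1 n)

/-- `l̃₃` on three degree-0 elements. -/
noncomputable def tl3 (T : TwoTermLinfty G0 G1) (a b c : G0 × (G0 →ₗ[ℝ] G1)) : G1 :=
  -(1/2 : ℝ) • T.l3 a.1 b.1 c.1
  - (1/2 : ℝ) • (c.2 (T.l2 a.1 b.1) + a.2 (T.l2 b.1 c.1) + b.2 (T.l2 c.1 a.1))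
  - (1/4 : ℝ) • (c.2 (T.l1 (a.2 b.1)) - c.2 (T.l1 (b.2 a.1))
      + a.2 (T.l1 (b.2 c.1)) - a.2 (T.l1 (c.2 b.1))
      + b.2 (T.l1 (c.2 a.1)) - b.2 (T.l1 (a.2 c.1)))
  - (1/4 : ℝ) • (T.l2' a.1 (b.2 c.1) - T.l2' a.1 (c.2 b.1)
      + T.l2' b.1 (c.2 a.1) - T.l2' b.1 (a.2 c.1)
      + T.l2' c.1 (a.2 b.1) - T.l2' c.1 (b.2 a.1))

/-- `F₀(x,φ) = x`. -/
def F0 (a : G0 × (G0 →ₗ[ℝ] G1)) : G0 := a.1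

/-- `F₁ = id`. -/
def F1 (n : G1) : G1 := n

/-- `F₂((x,φ),(y,ψ)) = ½(φ(y) − ψ(x))`. -/
noncomputable def F2 (a b : G0 × (G0 →ₗ[ℝ] G1)) : G1 := (1/2 : ℝ) • (a.2 b.1 - b.2 a.1)

end Tilde

/-!
The bracket `l̃₂(a, b)` is the bracket of the semidirect-type extension of `g₀` by `Hom(g₀, g₋₁)`,
corrected by the boundary `l̃₁(F₂(a, b))`. The identity for `F₂(a, l̃₁(n))` turns the contribution
of this boundary to the cyclic sum of `F₂(l̃₂(a, b), c)` into the cyclic sum of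
`l₂(F₀(c), F₂(a, b)) - l̃₂(c, F₂(a, b))`. Both the remaining cyclic sum and `l̃₃` are combinations
of `l₃(x, y, z)` and of the cyclic sums of `φ(l₂(y, z))` and `l̃₂(a, F₂(b, c))`, and there
everything but a single `l₃(x, y, z)` cancels.
-/

section F2

variable {G0 G1 : Type*} [AddCommGroup G0] [Module ℝ G0] [AddCommGroup G1] [Module ℝ G1]

theorem F2_skew (a b : G0 × (G0 →ₗ[ℝ] G1)) : F2 a b = -F2 b a := by
  simp only [F2]
  module

theorem F2_add_left (a b c : G0 × (G0 →ₗ[ℝ] G1)) : F2 (a + b) c = F2 a c + F2 b c := by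
  simp only [F2, Prod.fst_add, Prod.snd_add, LinearMap.add_apply, map_add]
  module

end F2

namespace TwoTermLinfty

variable {G0 G1 : Type*} [AddCommGroup G0] [Module ℝ G0] [AddCommGroup G1] [Module ℝ G1]
  (T : TwoTermLinfty G0 G1)

theorem l3_cyclic (x y z : G0) : T.l3 y z x = T.l3 x y z := by
  rw [T.alt₂ y z x, T.alt₁ y x z, neg_neg]

/-- The bracket on `g₀ ⊕ Hom(g₀, g₋₁)` in which `g₀` acts on `Hom(g₀, g₋₁)` by
`x ▷ ψ = [l₂(x, ·), ψ]`, two homomorphisms have the commutator `φ l₁ ψ - ψ l₁ φ`, and `l₃` is the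
cocycle of the extension. It is `l̃₂` without its correction term `l̃₁ ∘ F₂`. -/
noncomputable def semidirectBracket (a b : G0 × (G0 →ₗ[ℝ] G1)) : G0 × (G0 →ₗ[ℝ] G1) :=
  (T.l2 a.1 b.1,
   T.l3 a.1 b.1 + (T.l2' a.1 ∘ₗ b.2 - b.2 ∘ₗ T.l2 a.1) - (T.l2' b.1 ∘ₗ a.2 - a.2 ∘ₗ T.l2 b.1)
     + (a.2 ∘ₗ T.l1 ∘ₗ b.2 - b.2 ∘ₗ T.l1 ∘ₗ a.2))

theorem tl2_eq_semidirectBracket_add_tl1 (a b : G0 × (G0 →ₗ[ℝ] G1)) :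
    tl2 T a b = T.semidirectBracket a b + tl1 T (F2 a b) := by
  simp only [tl2, semidirectBracket, tl1, F2, map_smul, map_sub, Prod.mk_add_mk]
  congr 1 <;> module

theorem F0_tl2_sub_l2 (a b : G0 × (G0 →ₗ[ℝ] G1)) :
    F0 (tl2 T a b) - T.l2 (F0 a) (F0 b) = T.l1 (F2 a b) := by
  rw [tl2_eq_semidirectBracket_add_tl1]
  exact add_sub_cancel_left _ _

theorem tl2'_sub_l2' (a : G0 × (G0 →ₗ[ℝ] G1)) (n : G1) :
    tl2' T a n - T.l2' a.1 n = F2 a (tl1 T n) := by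
  simp only [tl2', F2, tl1, LinearMap.flip_apply]
  module

theorem F2_tl2 (a b c : G0 × (G0 →ₗ[ℝ] G1)) :
    F2 (tl2 T a b) c =
      F2 (T.semidirectBracket a b) c + (T.l2' c.1 (F2 a b) - tl2' T c (F2 a b)) := by
  rw [tl2_eq_semidirectBracket_add_tl1, F2_add_left, F2_skew (tl1 T _), ← tl2'_sub_l2', neg_sub]

theorem F2_semidirectBracket_cyclic_sum (a b c : G0 × (G0 →ₗ[ℝ] G1)) :
    F2 (T.semidirectBracket a b) c + F2 (T.semidirectBracket b c) a
        + F2 (T.semidirectBracket c a) b =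
      (3/2 : ℝ) • T.l3 a.1 b.1 c.1
        + (1/2 : ℝ) • (a.2 (T.l2 b.1 c.1) + b.2 (T.l2 c.1 a.1) + c.2 (T.l2 a.1 b.1))
        + (2 : ℝ) • (tl2' T a (F2 b c) + tl2' T b (F2 c a) + tl2' T c (F2 a b)) := by
  simp only [F2, semidirectBracket, tl2', LinearMap.add_apply, LinearMap.sub_apply,
    LinearMap.comp_apply, map_smul, map_sub, map_neg, T.skew b.1 a.1, T.skew c.1 b.1,
    T.skew a.1 c.1, T.l3_cyclic a.1 b.1 c.1, ← T.l3_cyclic c.1 a.1 b.1]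
  module

theorem tl3_eq_sub_tl2'_cyclic_sum (a b c : G0 × (G0 →ₗ[ℝ] G1)) :
    tl3 T a b c =
      -(1/2 : ℝ) • T.l3 a.1 b.1 c.1
        - (1/2 : ℝ) • (a.2 (T.l2 b.1 c.1) + b.2 (T.l2 c.1 a.1) + c.2 (T.l2 a.1 b.1))
        - (tl2' T a (F2 b c) + tl2' T b (F2 c a) + tl2' T c (F2 a b)) := by
  simp only [tl3, tl2', F2, map_smul, map_sub]
  module

theorem F2_tl2_cyclic_sum_add_tl3 (a b c : G0 × (G0 →ₗ[ℝ] G1)) :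
    F2 (tl2 T a b) c + F2 (tl2 T b c) a + F2 (tl2 T c a) b + tl3 T a b c =
      T.l2' a.1 (F2 b c) + T.l2' b.1 (F2 c a) + T.l2' c.1 (F2 a b) + T.l3 a.1 b.1 c.1 := by
  rw [F2_tl2, F2_tl2, F2_tl2, tl3_eq_sub_tl2'_cyclic_sum]
  linear_combination (norm := module) T.F2_semidirectBracket_cyclic_sum a b c

end TwoTermLinfty

/-- Theorem 4.8 of Lang–Sheng–Xu: `(F₀, F₁, F₂)` is an L∞-algebra homomorphism from
the associated 2-term L∞-algebra `g̃` to the original one `g`. -/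
theorem F_is_Linfty_homomorphism {G0 G1 : Type*} [AddCommGroup G0] [Module ℝ G0]
    [AddCommGroup G1] [Module ℝ G1] (T : TwoTermLinfty G0 G1) :
    -- (i) F₀ ∘ l̃₁ = l₁ ∘ F₁
    (∀ n : G1, F0 (tl1 T n) = T.l1 (F1 n)) ∧
    -- (ii) F₀(l̃₂(a,b)) − l₂(F₀(a),F₀(b)) = l₁(F₂(a,b))
    (∀ a b : G0 × (G0 →ₗ[ℝ] G1),
      F0 (tl2 T a b) - T.l2 (F0 a) (F0 b) = T.l1 (F2 a b)) ∧
    -- (iii) F₁(l̃₂(a,n)) − l₂(F₀(a),F₁(n)) = F₂(a, l̃₁(n))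
    (∀ (a : G0 × (G0 →ₗ[ℝ] G1)) (n : G1),
      F1 (tl2' T a n) - T.l2' (F0 a) (F1 n) = F2 a (tl1 T n)) ∧
    -- (iv) compatibility of F₂ with l̃₃ and l₃
    (∀ a b c : G0 × (G0 →ₗ[ℝ] G1),
      F2 (tl2 T a b) c + F2 (tl2 T b c) a + F2 (tl2 T c a) b + F1 (tl3 T a b c)
        = T.l2' (F0 a) (F2 b c) + T.l2' (F0 b) (F2 c a) + T.l2' (F0 c) (F2 a b)
          + T.l3 (F0 a) (F0 b) (F0 c)) :=
  ⟨fun _ => rfl, T.F0_tl2_sub_l2, T.tl2'_sub_l2', T.F2_tl2_cyclic_sum_add_tl3⟩
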